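/- arXiv:2305.03906 — 2 statements merged into one kernel-verified Lean document; each statement's English description precedes it below -/
import Mathlib

section
/- Let F, G ∈ F[x] with deg F = n > deg G = m ≥ 0, and assume the roots α_1, …, α_n ∈ F̄ of F are pairwise distinct. For 0 ≤ k ≤ m, let S_k be the k-th subresultant polynomial of F and G and let s_k be the coefficient of x^k in S_k. Then for every 0 ≤ k ≤ m, the degree of gcd(F, G) equals k if and only if s_0 = s_1 = ⋯ = s_{k−1} = 0 and s_k ≠ 0; moreover, if deg gcd(F, G) = k, then S_k is a greatest common divisor of F and G in F̄[x] (i.e., S_k is a nonzero constant multiple of gcd(F, G)). -/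
open Polynomial Matrix BigOperators
open scoped Classical

noncomputable section

/-- The Vandermonde-type matrix with `(i,j)` entry `α_j^{n−i}` (1-based `i`). -/
def vmat {L : Type*} [Field L] (n : ℕ) (α : Fin n → L) : Matrix (Fin n) (Fin n) L :=
  Matrix.of fun i j => α j ^ (n - 1 - (i : ℕ))

/-- The `(n+1) × (n+1)` matrix whose determinant is the numerator `D` in the
root expression of the `k`-th subresultant polynomial (power basis):
rows `1,…,n−k` have entries `α_j^{n−k−i} G(α_j)` (last column `0`),
rows `n−k+1,…,n+1` have entries `α_j^{k+1−i}` (last column `x^{k+1−i}`). -/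
def subresNum {K L : Type*} [Field K] [Field L] [Algebra K L] (n k : ℕ)
    (α : Fin n → L) (G : Polynomial K) :
    Matrix (Fin (n + 1)) (Fin (n + 1)) (Polynomial L) :=
  Matrix.of fun i j =>
    if hj : (j : ℕ) < n then
      if (i : ℕ) < n - k then
        Polynomial.C (α ⟨(j : ℕ), hj⟩ ^ (n - k - 1 - (i : ℕ)) *
          Polynomial.aeval (α ⟨(j : ℕ), hj⟩) G)
      else Polynomial.C (α ⟨(j : ℕ), hj⟩ ^ (n - (i : ℕ)))
    else
      if (i : ℕ) < n - k then 0 else Polynomial.X ^ (n - (i : ℕ))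

/-- The `k`-th subresultant polynomial of `P` and `G` in terms of the roots `α` of `P`:
`S_k = (−1)^k a^{m−k} · D / V`. -/
def subresPoly {K L : Type*} [Field K] [Field L] [Algebra K L] (n m k : ℕ)
    (a : K) (α : Fin n → L) (G : Polynomial K) : Polynomial L :=
  Polynomial.C ((-1) ^ k * algebraMap K L a ^ (m - k) / (vmat n α).det) *
    (subresNum n k α G).det

/-! Laplace expansion of `D` along its last column shows that `S_k` has degree at most `k` and that
`s_k` is, up to a nonzero factor, an `n × n` minor whose rows are the values at the roots of `F` of
`x^(n-k-1) G, …, x G, G, x^(k-1), …, x, 1`. As the roots are distinct, this minor vanishes iff there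
is a nontrivial relation `F ∣ A G + B` with `deg A < n - k` and `deg B < k`. Put `d = gcd(F, G)`.
For `k < deg d` the pair `(F / d, 0)` is such a relation; for `k = deg d` there is none, since
`d ∣ B` forces `B = 0`, and then `F ∣ A d` forces `A = 0`. Finally, at a common root of `F` and `G`
two columns of `D` agree, so `d ∣ S_k`. -/

section Determinant

variable {R : Type*} [CommRing R]

theorem det_eq_sum_C_mul_last_column {n : ℕ} {M : Matrix (Fin (n + 1)) (Fin (n + 1)) R[X]}
    {A : Matrix (Fin (n + 1)) (Fin n) R} (hM : ∀ i j, M i (Fin.castSucc j) = C (A i j)) :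
    M.det = ∑ i : Fin (n + 1),
      C ((-1) ^ (i + n : ℕ) * (A.submatrix i.succAbove id).det) * M i (Fin.last n) := by
  rw [det_succ_column M (Fin.last n)]
  refine Finset.sum_congr rfl fun i _ => ?_
  have hminor : M.submatrix i.succAbove (Fin.last n).succAbove =
      (A.submatrix i.succAbove id).map C := by
    ext1 r j
    simp only [submatrix_apply, Fin.succAbove_last, hM, Matrix.map_apply, id]
  rw [hminor, ← RingHom.mapMatrix_apply, ← RingHom.map_det, Fin.val_last, C_mul, C_pow, C_neg, C_1]
  ring

theorem det_of_map_basis_eq_zero_iff [IsDomain R] {ι M : Type*} [Fintype ι] [DecidableEq ι]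
    [AddCommGroup M] [Module R M] (b : Module.Basis ι R M) (φ : M →ₗ[R] ι → R) :
    (Matrix.of fun i => φ (b i)).det = 0 ↔ ∃ x ≠ 0, φ x = 0 := by
  have hvecMul (v : ι → R) : v ᵥ* Matrix.of (fun i => φ (b i)) = φ (b.equivFun.symm v) := by
    simp only [vecMul_eq_sum, b.equivFun_symm_apply, map_sum, map_smul]
    rfl
  simp only [← exists_vecMul_eq_zero_iff, hvecMul]
  refine b.equivFun.symm.toEquiv.exists_congr fun v => ?_
  simp only [LinearEquiv.coe_toEquiv, ne_eq, LinearEquiv.map_eq_zero_iff]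

end Determinant

section EvaluationMatrix

variable {R ι : Type*} [CommRing R]

/-- The matrix whose `r` rows are the values at the nodes `α` of the polynomials
`x^(l-1) g, …, x g, g, x^(r-l-1), …, x, 1`. For `l = n - k` it consists of the first `n` columns of
`subresNum n k` if `r = n + 1`, and gives the `k`-th subresultant, up to normalization, if
`r = n`. -/
def subresEval (l r : ℕ) (α : ι → R) (g : R[X]) : Matrix (Fin r) ι R :=
  Matrix.of fun i j =>
    if (i : ℕ) < l then α j ^ (l - 1 - i : ℕ) * g.eval (α j) else α j ^ (r - 1 - i : ℕ)

theorem subresEval_submatrix_succAbove {l r : ℕ} (hl : l < r + 1) (α : ι → R) (g : R[X]) :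
    (subresEval l (r + 1) α g).submatrix (Fin.succAbove ⟨l, hl⟩) id = subresEval l r α g := by
  ext i j
  simp only [subresEval, submatrix_apply, of_apply, id]
  by_cases hi : (i : ℕ) < l
  · rw [Fin.succAbove_of_castSucc_lt _ _ hi, Fin.val_castSucc, if_pos hi, if_pos hi]
  · rw [Fin.succAbove_of_le_castSucc _ _ (not_lt.1 hi), Fin.val_succ, if_neg (by omega), if_neg hi,
      show r + 1 - 1 - (i + 1) = r - 1 - (i : ℕ) by omega]

/-- The values `A g + B` at the nodes `α`, as a function of a pair `(B, A)` of polynomials of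
degrees less than `k` and `l`. -/
def bezoutEval (k l : ℕ) (α : ι → R) (g : R[X]) : R[X]_k × R[X]_l →ₗ[R] ι → R :=
  LinearMap.pi fun j => leval (α j) ∘ₗ
    ((R[X]_k).subtype.coprod (LinearMap.mulRight R g ∘ₗ (R[X]_l).subtype))

theorem bezoutEval_apply (k l : ℕ) (α : ι → R) (g : R[X]) (p : R[X]_k × R[X]_l) (j : ι) :
    bezoutEval k l α g p j = ((p.2 : R[X]) * g + p.1).eval (α j) := by
  simp [bezoutEval, add_comm]

theorem bezoutEval_basisProd (k l : ℕ) (α : ι → R) (g : R[X]) (i : Fin (k + l)) (j : ι) :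
    bezoutEval k l α g (degreeLT.basisProd R k l i) j = subresEval l (k + l) α g i.rev j := by
  rw [bezoutEval_apply]
  induction i using Fin.addCases with
  | left i =>
    have hi : k + l - 1 - (k + l - (i + 1)) = (i : ℕ) := by omega
    simp [subresEval, hi, show ¬ k + l - (i + 1) < l by omega]
  | right i =>
    have hi : l - 1 - (k + l - (k + i + 1)) = (i : ℕ) := by omega
    simp [subresEval, hi, show k + l - (k + i + 1) < l by omega]

theorem det_subresEval_eq_zero_iff [IsDomain R] (k l : ℕ) (α : Fin (k + l) → R) (g : R[X]) :
    (subresEval l (k + l) α g).det = 0 ↔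
      ∃ A B : R[X], (A ≠ 0 ∨ B ≠ 0) ∧ A.degree < l ∧ B.degree < k ∧
        ∀ j, (A * g + B).eval (α j) = 0 := by
  have hrows : subresEval l (k + l) α g = Matrix.of fun i =>
      bezoutEval k l α g ((degreeLT.basisProd R k l).reindex Fin.revPerm i) := by
    ext i j
    simp [bezoutEval_basisProd]
  rw [hrows, det_of_map_basis_eq_zero_iff]
  constructor
  · rintro ⟨⟨B, A⟩, hne, hker⟩
    refine ⟨A, B, ?_, mem_degreeLT.1 A.2, mem_degreeLT.1 B.2, fun j => ?_⟩
    · simpa [Prod.ext_iff, -not_and, not_and_or, or_comm] using hne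
    · rw [← bezoutEval_apply k l α g (B, A), hker, Pi.zero_apply]
  · rintro ⟨A, B, hne, hA, hB, hroot⟩
    refine ⟨(⟨B, mem_degreeLT.2 hB⟩, ⟨A, mem_degreeLT.2 hA⟩), ?_, funext fun j => ?_⟩
    · simpa [Prod.ext_iff, -not_and, not_and_or, or_comm] using hne
    · rw [bezoutEval_apply, hroot, Pi.zero_apply]

end EvaluationMatrix

section Relation

variable {R L : Type*} [CommRing R] [Field L]

/-- A nontrivial relation `f ∣ A g + B` with `deg A < deg f - k` and `deg B < k`; its existence is
what the vanishing of the `k`-th subresultant of `f` and `g` expresses for `k ≤ deg f`. -/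
def HasSubresRelation (f g : R[X]) (k : ℕ) : Prop :=
  ∃ A B : R[X], (A ≠ 0 ∨ B ≠ 0) ∧ A.degree < (f.natDegree - k : ℕ) ∧ B.degree < k ∧ f ∣ A * g + B

theorem HasSubresRelation.of_lt_natDegree [IsDomain R] {f g d : R[X]} (hf : f ≠ 0) (hdf : d ∣ f)
    (hdg : d ∣ g) {k : ℕ} (hk : k < d.natDegree) : HasSubresRelation f g k := by
  obtain ⟨A, rfl⟩ := hdf
  obtain ⟨hd, hA⟩ := mul_ne_zero_iff.1 hf
  refine ⟨A, 0, Or.inl hA, ?_, by simp, ?_⟩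
  · rw [← natDegree_lt_iff_degree_lt hA, natDegree_mul hd hA]
    omega
  · rw [add_zero, mul_comm d A]
    exact mul_dvd_mul_left A hdg

theorem not_hasSubresRelation_natDegree_gcd {f : L[X]} (hf : f ≠ 0) (g : L[X]) :
    ¬ HasSubresRelation f g (EuclideanDomain.gcd f g).natDegree := by
  set d := EuclideanDomain.gcd f g with hd
  have hdf : d ∣ f := EuclideanDomain.gcd_dvd_left f g
  have hdg : d ∣ g := EuclideanDomain.gcd_dvd_right f g
  have hd0 : d ≠ 0 := ne_zero_of_dvd_ne_zero hf hdf
  rintro ⟨A, B, hne, hA, hB, hdvd⟩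
  have hB0 : B = 0 := by
    have hdB : d ∣ B := (dvd_add_right (hdg.mul_left A)).1 (hdf.trans hdvd)
    exact eq_zero_of_dvd_of_degree_lt hdB (by rwa [degree_eq_natDegree hd0])
  have hA0 : A ≠ 0 := hne.resolve_right (not_not_intro hB0)
  have hfAg : f ∣ A * g := by rwa [hB0, add_zero] at hdvd
  have hfAd : f ∣ A * d := by
    rw [hd, EuclideanDomain.gcd_eq_gcd_ab, mul_add, ← mul_assoc, ← mul_assoc]
    exact ((dvd_mul_left f A).mul_right _).add (hfAg.mul_right _)
  have hdeg := natDegree_le_of_dvd hfAd (mul_ne_zero hA0 hd0)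
  rw [natDegree_mul hA0 hd0] at hdeg
  have hAdeg := (natDegree_lt_iff_degree_lt hA0).2 hA
  omega

theorem hasSubresRelation_iff_lt_natDegree_gcd {f g : L[X]} (hf : f ≠ 0) {k : ℕ}
    (hk : k ≤ (EuclideanDomain.gcd f g).natDegree) :
    HasSubresRelation f g k ↔ k < (EuclideanDomain.gcd f g).natDegree := by
  refine ⟨fun hrel => hk.lt_of_ne ?_, .of_lt_natDegree hf
    (EuclideanDomain.gcd_dvd_left f g) (EuclideanDomain.gcd_dvd_right f g)⟩
  rintro rfl
  exact not_hasSubresRelation_natDegree_gcd hf g hrel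

end Relation

section Nodes

variable {L ι : Type*} [Field L] [Fintype ι] {α : ι → L}

theorem nodal_dvd_iff_forall_eval_eq_zero (hα : Function.Injective α) {p : L[X]} :
    Lagrange.nodal Finset.univ α ∣ p ↔ ∀ j, p.eval (α j) = 0 := by
  refine ⟨fun h j => eval_eq_zero_of_dvd_of_eval_eq_zero h
    (Lagrange.eval_nodal_at_node (Finset.mem_univ j)), fun h => ?_⟩
  exact Finset.prod_dvd_of_coprime (fun _ _ _ _ hij => pairwise_coprime_X_sub_C hα hij)
    fun j _ => dvd_iff_isRoot.2 (h j)

theorem dvd_of_forall_common_root (hα : Function.Injective α) {d p : L[X]}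
    (hd : d ∣ Lagrange.nodal Finset.univ α)
    (hp : ∀ j, d.eval (α j) = 0 → p.eval (α j) = 0) : d ∣ p := by
  obtain ⟨e, he⟩ := hd
  have he0 : e ≠ 0 := right_ne_zero_of_mul (he ▸ Lagrange.nodal_ne_zero)
  rw [← mul_dvd_mul_iff_right he0, ← he, nodal_dvd_iff_forall_eval_eq_zero hα]
  intro j
  have hj : d.eval (α j) * e.eval (α j) = 0 := by
    rw [← eval_mul, ← he, Lagrange.eval_nodal_at_node (Finset.mem_univ j)]
  rw [eval_mul, mul_eq_zero]
  exact (mul_eq_zero.1 hj).imp_left (hp j)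

theorem natDegree_eq_card_of_associated_nodal {f : L[X]}
    (hf : Associated f (Lagrange.nodal Finset.univ α)) : f.natDegree = Fintype.card ι := by
  rw [natDegree_eq_of_degree_eq (degree_eq_degree_of_associated hf), Lagrange.natDegree_nodal,
    Finset.card_univ]

theorem natDegree_gcd_le_card_of_associated_nodal {f : L[X]}
    (hf : Associated f (Lagrange.nodal Finset.univ α)) (g : L[X]) :
    (EuclideanDomain.gcd f g).natDegree ≤ Fintype.card ι := by
  have hf0 : f ≠ 0 := hf.ne_zero_iff.2 Lagrange.nodal_ne_zero
  rw [← natDegree_eq_card_of_associated_nodal hf]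
  exact natDegree_le_of_dvd (EuclideanDomain.gcd_dvd_left f g) hf0

end Nodes

section Subresultant

variable {K L : Type*} [Field K] [Field L] [Algebra K L] {n k : ℕ}

theorem det_vmat (α : Fin n → L) :
    (vmat n α).det = ∏ i, ∏ j ∈ Finset.Ioi i, (α i - α j) := by
  have hvmat : vmat n α = (projVandermonde 1 α)ᵀ := by
    ext i j
    simp [vmat, projVandermonde_apply, Nat.sub_sub, add_comm]
  simp [hvmat, det_projVandermonde]

theorem det_vmat_ne_zero {α : Fin n → L} (hα : Function.Injective α) : (vmat n α).det ≠ 0 := by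
  simp only [det_vmat, Finset.prod_ne_zero_iff, Finset.mem_Ioi, sub_ne_zero]
  exact fun i _ j hij => hα.ne hij.ne

theorem det_subresEval_eq_zero_iff_hasSubresRelation {α : Fin n → L}
    (hα : Function.Injective α) {f : L[X]} (hf : Associated f (Lagrange.nodal Finset.univ α))
    (g : L[X]) (hk : k ≤ n) :
    (subresEval (n - k) n α g).det = 0 ↔ HasSubresRelation f g k := by
  have hdeg : f.natDegree = n := by
    rw [natDegree_eq_card_of_associated_nodal hf, Fintype.card_fin]
  obtain ⟨l, rfl⟩ := Nat.exists_eq_add_of_le hk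
  simp only [HasSubresRelation, hdeg, Nat.add_sub_cancel_left, hf.dvd_iff_dvd_left,
    nodal_dvd_iff_forall_eval_eq_zero hα, det_subresEval_eq_zero_iff]

theorem subresNum_castSucc (α : Fin n → L) (Q : K[X]) (i : Fin (n + 1)) (j : Fin n) :
    subresNum n k α Q i j.castSucc =
      C (subresEval (n - k) (n + 1) α (Q.map (algebraMap K L)) i j) := by
  simp only [subresNum, subresEval, of_apply, Fin.val_castSucc, Fin.is_lt, dite_true, Fin.eta,
    eval_map_algebraMap, Nat.add_sub_cancel]
  split_ifs <;> rfl

theorem subresNum_last (α : Fin n → L) (Q : K[X]) (i : Fin (n + 1)) :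
    subresNum n k α Q i (Fin.last n) = if (i : ℕ) < n - k then 0 else X ^ (n - i : ℕ) := by
  simp [subresNum]

theorem natDegree_det_subresNum_le (hk : k ≤ n) (α : Fin n → L) (Q : K[X]) :
    (subresNum n k α Q).det.natDegree ≤ k := by
  rw [det_eq_sum_C_mul_last_column (subresNum_castSucc α Q)]
  refine natDegree_sum_le_of_forall_le _ _ fun i _ => (natDegree_C_mul_le _ _).trans ?_
  rw [subresNum_last]
  split_ifs with hi
  · simp
  · rw [natDegree_X_pow]
    omega

theorem coeff_det_subresNum (hk : k ≤ n) (α : Fin n → L) (Q : K[X]) :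
    (subresNum n k α Q).det.coeff k =
      (-1) ^ k * (subresEval (n - k) n α (Q.map (algebraMap K L))).det := by
  have hlast (i : Fin (n + 1)) :
      (subresNum n k α Q i (Fin.last n)).coeff k = if (i : ℕ) = n - k then 1 else 0 := by
    rw [subresNum_last]
    split_ifs with h₁ h₂ h₂
    · omega
    · simp
    · rw [coeff_X_pow, if_pos (by omega)]
    · rw [coeff_X_pow, if_neg (by omega)]
  have hsign : (-1 : L) ^ (n - k + n) = (-1) ^ k := by
    rw [show n - k + n = k + 2 * (n - k) by omega, pow_add, pow_mul, neg_one_sq, one_pow, mul_one]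
  rw [det_eq_sum_C_mul_last_column (subresNum_castSucc α Q), finsetSum_coeff]
  simp only [coeff_C_mul, hlast]
  rw [Finset.sum_eq_single ⟨n - k, by omega⟩, subresEval_submatrix_succAbove, if_pos rfl, hsign,
    mul_one]
  · intro i _ hi
    rw [if_neg (fun h => hi (Fin.ext h)), mul_zero]
  · simp

theorem eval_det_subresNum_of_common_root {α : Fin n → L} {Q : K[X]} {j : Fin n}
    (hj : aeval (α j) Q = 0) : (subresNum n k α Q).det.eval (α j) = 0 := by
  rw [← coe_evalRingHom, RingHom.map_det]
  refine det_zero_of_column_eq (Fin.castSucc_lt_last j).ne fun i => ?_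
  simp only [RingHom.mapMatrix_apply, Matrix.map_apply, subresNum, of_apply, Fin.val_castSucc,
    Fin.is_lt, dite_true, Fin.eta, hj, Fin.val_last, lt_irrefl, dite_false]
  split_ifs <;> simp

theorem natDegree_subresPoly_le (hk : k ≤ n) (m : ℕ) (a : K) (α : Fin n → L) (Q : K[X]) :
    (subresPoly n m k a α Q).natDegree ≤ k :=
  (natDegree_C_mul_le _ _).trans (natDegree_det_subresNum_le hk α Q)

theorem coeff_subresPoly (hk : k ≤ n) (m : ℕ) (a : K) (α : Fin n → L) (Q : K[X]) :
    (subresPoly n m k a α Q).coeff k = algebraMap K L a ^ (m - k) *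
      (subresEval (n - k) n α (Q.map (algebraMap K L))).det / (vmat n α).det := by
  have hsign : (-1 : L) ^ k * (-1) ^ k = 1 := by rw [← mul_pow, neg_one_mul, neg_neg, one_pow]
  rw [subresPoly, coeff_C_mul, coeff_det_subresNum hk]
  linear_combination (algebraMap K L a ^ (m - k) *
    (subresEval (n - k) n α (Q.map (algebraMap K L))).det / (vmat n α).det) * hsign

theorem dvd_subresPoly {α : Fin n → L} (hα : Function.Injective α) {Q : K[X]} {d : L[X]}
    (hdα : d ∣ Lagrange.nodal Finset.univ α) (hdQ : d ∣ Q.map (algebraMap K L)) (m k : ℕ) (a : K) :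
    d ∣ subresPoly n m k a α Q := by
  refine (dvd_of_forall_common_root hα hdα fun j hj => ?_).mul_left _
  refine eval_det_subresNum_of_common_root ?_
  rw [← eval_map_algebraMap]
  exact eval_eq_zero_of_dvd_of_eval_eq_zero hdQ hj

variable {α : Fin n → L} {f : L[X]} {a : K}

theorem coeff_subresPoly_eq_zero_iff (ha : a ≠ 0) (hα : Function.Injective α)
    (hf : Associated f (Lagrange.nodal Finset.univ α)) (m : ℕ) (Q : K[X])
    (hk : k ≤ (EuclideanDomain.gcd f (Q.map (algebraMap K L))).natDegree) :
    (subresPoly n m k a α Q).coeff k = 0 ↔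
      k < (EuclideanDomain.gcd f (Q.map (algebraMap K L))).natDegree := by
  have hkn : k ≤ n := by
    simpa using hk.trans (natDegree_gcd_le_card_of_associated_nodal hf _)
  have hpow : algebraMap K L a ^ (m - k) ≠ 0 := pow_ne_zero _ (by simpa using ha)
  rw [coeff_subresPoly hkn, div_eq_zero_iff, or_iff_left (det_vmat_ne_zero hα),
    mul_eq_zero_iff_left hpow, det_subresEval_eq_zero_iff_hasSubresRelation hα hf _ hkn,
    hasSubresRelation_iff_lt_natDegree_gcd (hf.ne_zero_iff.2 Lagrange.nodal_ne_zero) hk]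

theorem associated_gcd_subresPoly (ha : a ≠ 0) (hα : Function.Injective α)
    (hf : Associated f (Lagrange.nodal Finset.univ α)) (m : ℕ) (Q : K[X])
    (hk : (EuclideanDomain.gcd f (Q.map (algebraMap K L))).natDegree = k) :
    Associated (EuclideanDomain.gcd f (Q.map (algebraMap K L))) (subresPoly n m k a α Q) := by
  have hS : subresPoly n m k a α Q ≠ 0 := by
    intro h
    exact hk.not_gt ((coeff_subresPoly_eq_zero_iff ha hα hf m Q hk.ge).1 (by rw [h, coeff_zero]))
  have hkn : k ≤ n := by
    simpa [hk] using natDegree_gcd_le_card_of_associated_nodal hf (Q.map (algebraMap K L))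
  refine associated_of_dvd_of_natDegree_le ?_ hS ((natDegree_subresPoly_le hkn m a α Q).trans hk.ge)
  exact dvd_subresPoly hα ((EuclideanDomain.gcd_dvd_left _ _).trans hf.dvd)
    (EuclideanDomain.gcd_dvd_right _ _) m k a

end Subresultant

theorem subresultant_gcd_criterion_general {K L : Type*} [Field K] [Field L] [Algebra K L]
    (n : ℕ) (P Q : K[X]) (hP : P ≠ 0) (α : Fin n → L)
    (hfact : P.map (algebraMap K L) =
      C (algebraMap K L P.leadingCoeff) * ∏ j : Fin n, (X - C (α j)))
    (hdist : Function.Injective α) (k : ℕ) :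
    ((EuclideanDomain.gcd (P.map (algebraMap K L)) (Q.map (algebraMap K L))).natDegree = k ↔
      (∀ j < k, (subresPoly n Q.natDegree j P.leadingCoeff α Q).coeff j = 0) ∧
        (subresPoly n Q.natDegree k P.leadingCoeff α Q).coeff k ≠ 0) ∧
    ((EuclideanDomain.gcd (P.map (algebraMap K L)) (Q.map (algebraMap K L))).natDegree = k →
      ∃ c : L, c ≠ 0 ∧ subresPoly n Q.natDegree k P.leadingCoeff α Q =
        C c * EuclideanDomain.gcd (P.map (algebraMap K L)) (Q.map (algebraMap K L))) := by
  have ha : P.leadingCoeff ≠ 0 := leadingCoeff_ne_zero.2 hP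
  have hunit : IsUnit (C (algebraMap K L P.leadingCoeff)) := isUnit_C.2 (by simpa using hP)
  have hf : Associated (P.map (algebraMap K L)) (Lagrange.nodal Finset.univ α) := by
    rw [hfact, Lagrange.nodal_eq]
    exact associated_unit_mul_left _ _ hunit
  have hs {j : ℕ} := coeff_subresPoly_eq_zero_iff (k := j) ha hdist hf Q.natDegree Q
  refine ⟨⟨?_, fun ⟨hlow, htop⟩ => ?_⟩, fun hk => ?_⟩
  · rintro rfl
    exact ⟨fun j hj => (hs hj.le).2 hj, fun h => lt_irrefl _ ((hs le_rfl).1 h)⟩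
  · rcases lt_trichotomy (EuclideanDomain.gcd (P.map (algebraMap K L))
        (Q.map (algebraMap K L))).natDegree k with hlt | heq | hgt
    · exact absurd ((hs le_rfl).1 (hlow _ hlt)) (lt_irrefl _)
    · exact heq
    · exact absurd ((hs hgt.le).2 hgt) htop
  · obtain ⟨u, hu⟩ := associated_gcd_subresPoly ha hdist hf Q.natDegree Q hk
    obtain ⟨c, hc, hcu⟩ := isUnit_iff.1 u.isUnit
    exact ⟨c, hc.ne_zero, by rw [hcu, mul_comm, hu]⟩

/-- the subresultants `s_k` detect the degree of `gcd(F,G)`, and if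
`deg gcd(F,G) = k` then `S_k` is a greatest common divisor of `F` and `G` in `F̄[x]`
(a nonzero constant multiple of the gcd). -/
theorem subresultant_gcd_criterion
    {K : Type*} [Field K] (n m : ℕ) (hmn : m < n)
    (P Q : Polynomial K) (hQ0 : Q ≠ 0)
    (hdegP : P.natDegree = n) (hdegQ : Q.natDegree = m)
    (α : Fin n → AlgebraicClosure K)
    (hfact : P.map (algebraMap K (AlgebraicClosure K)) =
      Polynomial.C (algebraMap K (AlgebraicClosure K) P.leadingCoeff) *
        ∏ j : Fin n, (Polynomial.X - Polynomial.C (α j)))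
    (hdist : Function.Injective α) :
    ∀ k ≤ m,
      ((EuclideanDomain.gcd (P.map (algebraMap K (AlgebraicClosure K)))
            (Q.map (algebraMap K (AlgebraicClosure K)))).natDegree = k ↔
        (∀ j < k, (subresPoly n m j P.leadingCoeff α Q).coeff j = 0) ∧
          (subresPoly n m k P.leadingCoeff α Q).coeff k ≠ 0) ∧
      ((EuclideanDomain.gcd (P.map (algebraMap K (AlgebraicClosure K)))
            (Q.map (algebraMap K (AlgebraicClosure K)))).natDegree = k →
        ∃ c : AlgebraicClosure K, c ≠ 0 ∧
          subresPoly n m k P.leadingCoeff α Q =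
            Polynomial.C c *
              EuclideanDomain.gcd (P.map (algebraMap K (AlgebraicClosure K)))
                (Q.map (algebraMap K (AlgebraicClosure K)))) := by
  subst hdegQ
  have hP : P ≠ 0 := ne_zero_of_natDegree_gt (hdegP ▸ hmn)
  exact fun k _ => subresultant_gcd_criterion_general n P Q hP α hfact hdist k
end
end

section
/- Let ω = (ω_n, …, ω_1, ω_0) be a general basis of the polynomials of degree ≤ n over a field F, let F(x) = a_n ∏_{j=1}^n (x − α_j) with a_n ≠ 0 and α_1, …, α_n ∈ F̄ arbitrary (not necessarily distinct), let G ∈ F[x] with deg G = m < n, and let 0 ≤ k ≤ m. Then the following denominator-free identity holds in F̄[x]: (−1)^{(n−k)(n−k−1)/2} · a_n^{n−k} · D_ω = (−1)^k · det([B_{ω,k}; X_{ω,k}]) · det W(α), where D_ω is the determinant of the (n+1)×(n+1) matrix over F̄[x] whose entry in row i (1 ≤ i ≤ n−k) and column j (1 ≤ j ≤ n) is ω_{n−k−i}(α_j) G(α_j) with last-column entry 0, and whose entry in row n−k+i (1 ≤ i ≤ k+1) and column j is ω_{k+1−i}(α_j), with last-column entry ω_{k+1−i}(x); B_{ω,k}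 is the (n−k)×n submatrix of the Bézout matrix B_ω of F and G in ω obtained by deleting its last k rows; and W(α) is the n×n matrix with (i,j) entry ω_{n−i}(α_j). -/
open Polynomial Matrix BigOperators

noncomputable section

/-- A *general basis* of the polynomials of degree ≤ `n` over `K`:
`ω i` is monic of degree `i` for every `i ≤ n`. -/
def IsGeneralBasis {K : Type*} [Field K] (n : ℕ) (ω : ℕ → Polynomial K) : Prop :=
  ∀ i ≤ n, (ω i).Monic ∧ (ω i).natDegree = i

/-- `B` is the Bézout matrix of `P` and `Q` in the basis `ω`:
`P(x)Q(y) − P(y)Q(x) = (x − y) · ω̄(x)ᵀ B ω̄(y)` in `K[x,y] = (K[y])[x]`,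
where the outer variable is `x` and the inner one is `y`, and
`ω̄ = (ω_{n−1}, …, ω_1, ω_0)ᵀ`. -/
def BezoutRelation {K : Type*} [Field K] (n : ℕ) (ω : ℕ → Polynomial K)
    (P Q : Polynomial K) (B : Matrix (Fin n) (Fin n) K) : Prop :=
  P.map Polynomial.C * Polynomial.C Q - Polynomial.C P * Q.map Polynomial.C =
    (Polynomial.X - Polynomial.C Polynomial.X) *
      ∑ i : Fin n, ∑ j : Fin n,
        (ω (n - 1 - (i : ℕ))).map Polynomial.C * Polynomial.C (ω (n - 1 - (j : ℕ))) *
          Polynomial.C (Polynomial.C (B i j))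

/-- The `(n−k) × n` submatrix of an `n × n` matrix obtained by deleting the last `k` rows. -/
def topRows {K : Type*} (n k : ℕ) (B : Matrix (Fin n) (Fin n) K) :
    Matrix (Fin (n - k)) (Fin n) K :=
  Matrix.of fun i j => B ⟨(i : ℕ), by have := i.isLt; omega⟩ j

/-- The `k × n` matrix `X_{ω,k}`: rows `1,…,k` carry `−I_k` in (1-based) columns
`n−k, …, n−1`, and the last column of row `i` is `ω_{k+1−i}`. -/
def Xmat {K : Type*} [Field K] (n k : ℕ) (ω : ℕ → Polynomial K) :
    Matrix (Fin k) (Fin n) (Polynomial K) :=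
  Matrix.of fun i j =>
    if (j : ℕ) = n - k - 1 + (i : ℕ) then -1
    else if (j : ℕ) = n - 1 then ω (k - (i : ℕ))
    else 0

/-- Stacking an `(n−k) × n` scalar matrix on top of a `k × n` polynomial matrix. -/
def stackMat {K : Type*} [Field K] {n k : ℕ}
    (M : Matrix (Fin (n - k)) (Fin n) K) (Y : Matrix (Fin k) (Fin n) (Polynomial K)) :
    Matrix (Fin n) (Fin n) (Polynomial K) :=
  Matrix.of fun i j =>
    if h : (i : ℕ) < n - k then Polynomial.C (M ⟨(i : ℕ), h⟩ j)
    else Y ⟨(i : ℕ) - (n - k), by have := i.isLt; omega⟩ j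

/-- The matrix `W(β)` with `(i,j)` entry `ω_{n−i}(β_j)` (1-based `i`). -/
def Wmat {K L : Type*} [Field K] [Field L] [Algebra K L] (n : ℕ)
    (ω : ℕ → Polynomial K) (α : Fin n → L) : Matrix (Fin n) (Fin n) L :=
  Matrix.of fun i j => Polynomial.aeval (α j) (ω (n - 1 - (i : ℕ)))

/-- The analogue `D_ω` of the subresultant numerator matrix expressed in the general
basis `ω`: rows `1,…,n−k` have entries `ω_{n−k−i}(α_j) G(α_j)` (last column `0`),
rows `n−k+1,…,n+1` have entries `ω_{k+1−i}(α_j)` (last column `ω_{k+1−i}(x)`). -/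
def subresNumW {K L : Type*} [Field K] [Field L] [Algebra K L] (n k : ℕ)
    (ω : ℕ → Polynomial K) (α : Fin n → L) (G : Polynomial K) :
    Matrix (Fin (n + 1)) (Fin (n + 1)) (Polynomial L) :=
  Matrix.of fun i j =>
    if hj : (j : ℕ) < n then
      if (i : ℕ) < n - k then
        Polynomial.C (Polynomial.aeval (α ⟨(j : ℕ), hj⟩) (ω (n - k - 1 - (i : ℕ))) *
          Polynomial.aeval (α ⟨(j : ℕ), hj⟩) G)
      else Polynomial.C (Polynomial.aeval (α ⟨(j : ℕ), hj⟩) (ω (n - (i : ℕ))))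
    else
      if (i : ℕ) < n - k then 0 else (ω (n - (i : ℕ))).map (algebraMap K L)

/-!
At a root `β` of `P` the Bézout relation becomes
`Q(β) · P(x) / (x − β) = ∑ i, (B ω̄(β))_i ω_{n−1−i}(x)`. Hence `(B ω̄(β))_i` is `Q(β)` times the
`ω_{n−1−i}`-coordinate of the divided difference `(P(x) − P(y)) / (x − y)` at `y = β`, and this
coordinate is a polynomial in `y` of degree `≤ i` whose coefficient of `y ^ i` is `a_n`. So the top
`n − k` rows of `B · W(α)` are an antitriangular matrix with antidiagonal `a_n` times the top rows
of `D_ω`. Since `ω₀ = 1`, the last row of `D_ω` is `(1, …, 1)`; clearing the last column with it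
turns the `k` rows above it into `−X_{ω,k} · W(α)`. The identity follows by taking determinants.
-/

theorem sign_revPerm (n : ℕ) :
    Equiv.Perm.sign (Fin.revPerm : Equiv.Perm (Fin n)) = (-1) ^ (n * (n - 1) / 2) := by
  rw [Equiv.Perm.sign_eq_prod_prod_Iio]
  have hrev : ∀ j : Fin n, ∀ i ∈ Finset.Iio j,
      (if Fin.revPerm i < Fin.revPerm j then (1 : ℤˣ) else -1) = -1 := fun j i hij =>
    if_neg (by simpa using (Finset.mem_Iio.mp hij).le)
  simp only [Finset.prod_congr rfl (hrev _), Finset.prod_const, Fin.card_Iio]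
  rw [Finset.prod_pow_eq_pow_sum, Fin.sum_univ_eq_sum_range fun i => i, Finset.sum_range_id]

theorem det_of_antitriangular {R : Type*} [CommRing R] {n : ℕ} {M : Matrix (Fin n) (Fin n) R}
    (hM : ∀ i j, j < i.rev → M i j = 0) :
    M.det = (-1) ^ (n * (n - 1) / 2) * ∏ i, M i i.rev := by
  have hrev : M = (M.submatrix id Fin.revPerm).submatrix id Fin.revPerm := by ext; simp
  have htri : (M.submatrix id Fin.revPerm).IsLowerTriangular := fun i j hij =>
    hM i _ (by simpa using hij)
  rw [hrev, det_permute', det_of_isLowerTriangular _ htri, sign_revPerm]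
  simp

theorem det_fromRows_mul_mul {R l m n : Type*} [CommRing R] [Fintype l] [DecidableEq l]
    [Fintype m] [DecidableEq m] [Fintype n] [DecidableEq n] (e : n ≃ l ⊕ m)
    (T : Matrix l l R) (U : Matrix m m R) (A : Matrix l n R) (A' : Matrix m n R) :
    ((fromRows (T * A) (U * A')).submatrix e id).det =
      T.det * U.det * ((fromRows A A').submatrix e id).det := by
  have hfactor : fromRows (T * A) (U * A') = fromBlocks T 0 0 U * fromRows A A' := by
    simp [fromBlocks_mul_fromRows]
  rw [hfactor, ← submatrix_mul_equiv _ _ _ e, det_mul, det_submatrix_equiv_self,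
    det_fromBlocks_zero₂₁]

section Coordinates

variable {R : Type*} [CommRing R] [IsDomain R] {S : Sequence R}
  (hS : ∀ i, IsUnit (S i).leadingCoeff) {p : R[X]}

theorem basis_repr_eq_zero_of_degree_lt {i : ℕ} (hp : p.degree < i) :
    (S.basis hS).repr p i = 0 := by
  have hspan : p ∈ Submodule.span R (S.basis hS '' Set.Iio i) := by
    have hcoe : ⇑(S.basis hS) = S := funext (S.basis_eq_self hS)
    rwa [hcoe, S.span_degreeLT fun j _ => hS j, mem_degreeLT]
  by_contra hi
  exact lt_irrefl i ((S.basis hS).mem_span_image.mp hspan (Finsupp.mem_support_iff.mpr hi))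

theorem basis_repr_eq_coeff {i : ℕ} (hi : (S i).Monic) (hp : p.natDegree ≤ i) :
    (S.basis hS).repr p i = p.coeff i := by
  have hSi : (S i).coeff i = 1 := by simpa using hi.coeff_natDegree
  have hlt : (p - p.coeff i • S i).degree < i := by
    rw [degree_lt_iff_coeff_zero]
    intro j hj
    rcases hj.eq_or_lt with rfl | hj
    · simp [hSi]
    · simp [coeff_eq_zero_of_natDegree_lt (hp.trans_lt hj),
        coeff_eq_zero_of_natDegree_lt ((S.natDegree_eq i).trans_lt hj)]
  have hrepr := basis_repr_eq_zero_of_degree_lt hS hlt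
  rw [map_sub, map_smul, ← S.basis_eq_self hS i, Module.Basis.repr_self] at hrepr
  simpa [sub_eq_zero] using hrepr

theorem sum_range_basis_repr_smul {N : ℕ} (hp : p.degree < N) :
    ∑ i ∈ Finset.range N, (S.basis hS).repr p i • S i = p := by
  conv_rhs => rw [← (S.basis hS).linearCombination_repr p, Finsupp.linearCombination_apply]
  have hsupp : ((S.basis hS).repr p).support ⊆ Finset.range N := fun i hi => by
    by_contra hiN
    rw [Finset.mem_range, not_lt] at hiN
    exact Finsupp.mem_support_iff.mp hi
      (basis_repr_eq_zero_of_degree_lt hS (hp.trans_le (Nat.cast_le.mpr hiN)))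
  rw [Finsupp.sum_of_support_subset _ hsupp _ (by simp)]
  simp only [Sequence.basis_eq_self]

end Coordinates

section DividedDifference

variable {R : Type*} [CommRing R]

/-- The divided difference `(p(x) − p(y)) / (x − y)` in `R[y][x]`: the outer variable is `x` and
the inner one is `y`. The numerator may be replaced by `p(x)` because `/ₘ` discards the remainder
`p(y)`. -/
def dividedDifference (p : R[X]) : R[X][X] :=
  p.map C /ₘ (X - C X)

theorem coeff_coeff_dividedDifference (p : R[X]) (t d : ℕ) :
    ((dividedDifference p).coeff t).coeff d = p.coeff (t + d + 1) := by
  rw [dividedDifference, coeff_divByMonic_X_sub_C, finsetSum_coeff,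
    natDegree_map_eq_of_injective C_injective]
  simp only [coeff_map, coeff_mul_C, coeff_X_pow, ite_mul, one_mul, zero_mul]
  rw [← Finset.sum_filter]
  rcases le_or_gt (t + d + 1) p.natDegree with h | h
  · have hfilter : {i ∈ Finset.Icc (t + 1) p.natDegree | d = i - (t + 1)} = {t + d + 1} := by
      ext i
      simp only [Finset.mem_filter, Finset.mem_Icc, Finset.mem_singleton]
      omega
    rw [hfilter, Finset.sum_singleton]
  · rw [coeff_eq_zero_of_natDegree_lt h]
    refine Finset.sum_eq_zero fun i hi => ?_
    obtain ⟨hIcc, hd⟩ := Finset.mem_filter.mp hi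
    have hbounds := Finset.mem_Icc.mp hIcc
    omega

theorem map_dividedDifference_evalRingHom (p : R[X]) (β : R) :
    (dividedDifference p).map (evalRingHom β) = p /ₘ (X - C β) := by
  have hcomp : (evalRingHom β).comp C = RingHom.id R := by ext; simp
  rw [dividedDifference, map_divByMonic _ (monic_X_sub_C X), Polynomial.map_map, hcomp]
  simp

/-- The polynomial in `y` obtained by applying the functional `φ` to the divided difference of `p`,
regarded as a polynomial in `x`. -/
def applyDividedDifference (φ : R[X] →ₗ[R] R) (p : R[X]) : R[X] :=
  (dividedDifference p).sum fun t q => φ (X ^ t) • q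

theorem eval_applyDividedDifference (φ : R[X] →ₗ[R] R) (p : R[X]) (β : R) :
    (applyDividedDifference φ p).eval β = φ (p /ₘ (X - C β)) := by
  rw [← map_dividedDifference_evalRingHom, applyDividedDifference, Polynomial.sum_def]
  conv_rhs => rw [(dividedDifference p).as_sum_support_C_mul_X_pow]
  rw [eval_finsetSum, Polynomial.map_sum, map_sum]
  refine Finset.sum_congr rfl fun t _ => ?_
  rw [Polynomial.map_mul, map_C, Polynomial.map_pow, map_X, ← smul_eq_C_mul, map_smul, eval_smul,
    coe_evalRingHom, smul_eq_mul, smul_eq_mul, mul_comm]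

theorem coeff_applyDividedDifference (φ : R[X] →ₗ[R] R) {p : R[X]} {n : ℕ} (hp : p.natDegree < n)
    (d : ℕ) :
    (applyDividedDifference φ p).coeff d =
      ∑ t ∈ Finset.range n, φ (X ^ t) * p.coeff (t + d + 1) := by
  have hdeg : (dividedDifference p).natDegree < n := by
    rw [dividedDifference, natDegree_divByMonic _ (monic_X_sub_C _),
      natDegree_map_eq_of_injective C_injective]
    exact (Nat.sub_le _ _).trans_lt hp
  rw [applyDividedDifference, Polynomial.sum_over_range' _ (fun t => smul_zero _) n hdeg,
    finsetSum_coeff]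
  simp only [coeff_smul, coeff_coeff_dividedDifference, smul_eq_mul]

variable {φ : R[X] →ₗ[R] R} {l n : ℕ} {p : R[X]}

theorem natDegree_applyDividedDifference_le (hφ : ∀ t < l, φ (X ^ t) = 0) (hp : p.natDegree ≤ n) :
    (applyDividedDifference φ p).natDegree ≤ n - 1 - l := by
  rw [natDegree_le_iff_coeff_eq_zero]
  intro d hd
  rw [coeff_applyDividedDifference φ (Nat.lt_succ_of_le hp)]
  refine Finset.sum_eq_zero fun t _ => ?_
  rcases lt_or_ge t l with ht | ht
  · rw [hφ t ht, zero_mul]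
  · rw [coeff_eq_zero_of_natDegree_lt (by omega), mul_zero]

theorem coeff_applyDividedDifference_of_eq (hφ : ∀ t < l, φ (X ^ t) = 0) (hp : p.natDegree ≤ n)
    (hl : l < n) :
    (applyDividedDifference φ p).coeff (n - 1 - l) = φ (X ^ l) * p.coeff n := by
  rw [coeff_applyDividedDifference φ (Nat.lt_succ_of_le hp), Finset.sum_eq_single l]
  · congr 2
    omega
  · intro t _ ht
    rcases ht.lt_or_gt with ht | ht
    · rw [hφ t ht, zero_mul]
    · rw [coeff_eq_zero_of_natDegree_lt (by omega), mul_zero]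
  · exact fun h => absurd (Finset.mem_range.mpr (by omega)) h

end DividedDifference

namespace IsGeneralBasis

variable {K : Type*} [Field K] {n : ℕ} {ω : ℕ → K[X]}

theorem apply_zero (hω : IsGeneralBasis n ω) : ω 0 = 1 :=
  (hω 0 n.zero_le).1.natDegree_eq_zero.mp (hω 0 n.zero_le).2

theorem map {L : Type*} [Field L] (hω : IsGeneralBasis n ω) (f : K →+* L) :
    IsGeneralBasis n fun i => (ω i).map f :=
  fun i hi => ⟨(hω i hi).1.map f, ((hω i hi).1.natDegree_map f).trans (hω i hi).2⟩

variable (hω : IsGeneralBasis n ω)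

/-- The general basis `ω`, continued by the monomials `X ^ i` for `i > n` to a polynomial sequence
in Mathlib's sense, which has no upper bound on its index. -/
def toSequence : Sequence K where
  elems' i := if i ≤ n then ω i else X ^ i
  degree_eq' i := by
    split_ifs with hi
    · rw [degree_eq_natDegree (hω i hi).1.ne_zero, (hω i hi).2]
    · exact degree_X_pow i

theorem toSequence_of_le {i : ℕ} (hi : i ≤ n) : hω.toSequence i = ω i :=
  if_pos hi

theorem isUnit_leadingCoeff_toSequence (i : ℕ) : IsUnit (hω.toSequence i).leadingCoeff :=
  (leadingCoeff_ne_zero.mpr (hω.toSequence.ne_zero i)).isUnit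

/-- The basis of `K[X]` formed by `hω.toSequence`; it supplies the coordinates of a polynomial
with respect to `ω`. -/
def basis : Module.Basis ℕ K K[X] :=
  hω.toSequence.basis hω.isUnit_leadingCoeff_toSequence

theorem basis_of_le {i : ℕ} (hi : i ≤ n) : hω.basis i = ω i :=
  (Sequence.basis_eq_self _ _ i).trans (hω.toSequence_of_le hi)

theorem repr_eq_coeff {i : ℕ} (hi : i ≤ n) {p : K[X]} (hp : p.natDegree ≤ i) :
    hω.basis.repr p i = p.coeff i :=
  basis_repr_eq_coeff _ (by rw [hω.toSequence_of_le hi]; exact (hω i hi).1) hp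

theorem sum_range_repr_smul {N : ℕ} (hN : N ≤ n + 1) {p : K[X]} (hp : p.degree < N) :
    ∑ i ∈ Finset.range N, hω.basis.repr p i • ω i = p := by
  conv_rhs => rw [← sum_range_basis_repr_smul hω.isUnit_leadingCoeff_toSequence hp]
  refine Finset.sum_congr rfl fun i hi => ?_
  rw [hω.toSequence_of_le (by have := Finset.mem_range.mp hi; omega), basis]

/-- The coordinate at `ω_{n−1−i}` of the divided difference `(P(x) − P(y)) / (x − y)` regarded as a
polynomial in `x`; it is a polynomial in `y`. The index is reversed to match the rows of the Bézout
matrix. -/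
def dividedDifferenceCoord (P : K[X]) (i : ℕ) : K[X] :=
  applyDividedDifference (hω.basis.coord (n - 1 - i)) P

variable {P : K[X]} {i : ℕ}

theorem coord_X_pow_of_lt (hi : i ≤ n) {t : ℕ} (ht : t < i) : hω.basis.coord i (X ^ t) = 0 := by
  rw [Module.Basis.coord_apply, hω.repr_eq_coeff hi ((natDegree_X_pow t).le.trans ht.le)]
  simp [coeff_X_pow, ht.ne']

theorem natDegree_dividedDifferenceCoord_le (hP : P.natDegree ≤ n) :
    (hω.dividedDifferenceCoord P i).natDegree ≤ i := by
  have hφ (t : ℕ) (ht : t < n - 1 - i) : hω.basis.coord (n - 1 - i) (X ^ t) = 0 :=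
    hω.coord_X_pow_of_lt (by omega) ht
  exact (natDegree_applyDividedDifference_le hφ hP).trans (by omega)

theorem coeff_dividedDifferenceCoord (hP : P.natDegree ≤ n) (hi : i < n) :
    (hω.dividedDifferenceCoord P i).coeff i = P.coeff n := by
  have hcoeff := coeff_applyDividedDifference_of_eq (fun t => hω.coord_X_pow_of_lt (by omega)) hP
    (by omega : n - 1 - i < n)
  rw [Module.Basis.coord_apply, hω.repr_eq_coeff (by omega) (natDegree_X_pow _).le,
    coeff_X_pow_self, one_mul] at hcoeff
  rwa [show n - 1 - (n - 1 - i) = i by omega] at hcoeff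

end IsGeneralBasis

section Bezout

variable {K : Type*} [Field K] {n : ℕ} {ω : ℕ → K[X]} {P Q : K[X]} {B : Matrix (Fin n) (Fin n) K}

theorem BezoutRelation.map {L : Type*} [Field L] (hB : BezoutRelation n ω P Q B) (f : K →+* L) :
    BezoutRelation n (fun i => (ω i).map f) (P.map f) (Q.map f) (B.map f) := by
  have hmap := congrArg (Polynomial.map (mapRingHom f)) hB
  have hcomp : (mapRingHom f).comp C = C.comp f := by ext; simp
  simpa [BezoutRelation, Polynomial.map_map, Polynomial.map_sum, hcomp] using hmap

theorem BezoutRelation.sum_smul_eq (hB : BezoutRelation n ω P Q B) {β : K} (hβ : P.IsRoot β) :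
    ∑ i : Fin n, (B *ᵥ fun j : Fin n => (ω (n - 1 - j)).eval β) i • ω (n - 1 - i) =
      Q.eval β • (P /ₘ (X - C β)) := by
  have hcomp : (evalRingHom β).comp C = RingHom.id K := by ext; simp
  have hmap := congrArg (Polynomial.map (evalRingHom β)) hB
  simp only [Polynomial.map_sub, Polynomial.map_mul, Polynomial.map_map, hcomp, map_C,
    Polynomial.map_id, Polynomial.map_sum, map_X, coe_evalRingHom, hβ.eq_zero, map_zero, zero_mul,
    sub_zero, eval_X, eval_C] at hmap
  apply mul_left_cancel₀ (X_sub_C_ne_zero β)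
  rw [smul_eq_C_mul, mul_left_comm, mul_divByMonic_eq_iff_isRoot.mpr hβ, mul_comm (C _) P, hmap]
  simp only [smul_eq_C_mul, mulVec, dotProduct, map_sum, map_mul, Finset.sum_mul]
  congr! 3
  ring

theorem BezoutRelation.mulVec_eq (hω : IsGeneralBasis n ω) (hB : BezoutRelation n ω P Q B) {β : K}
    (hβ : P.IsRoot β) (i : Fin n) :
    (B *ᵥ fun j : Fin n => (ω (n - 1 - j)).eval β) i =
      Q.eval β * (hω.dividedDifferenceCoord P i).eval β := by
  have hrepr := congrArg (hω.basis.coord (n - 1 - i)) (hB.sum_smul_eq hβ)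
  have hcoord (j : Fin n) :
      hω.basis.coord (n - 1 - i) (ω (n - 1 - j)) = if j = i then 1 else 0 := by
    rw [← hω.basis_of_le (by omega), Module.Basis.coord_apply, Module.Basis.repr_self,
      Finsupp.single_apply]
    congr 1
    ext
    omega
  rw [IsGeneralBasis.dividedDifferenceCoord, eval_applyDividedDifference]
  simpa [hcoord] using hrepr

end Bezout

section Block

variable {K : Type*} [Field K] {n k : ℕ} {ω : ℕ → K[X]} {α : Fin n → K}

/-- The matrix expressing the first `r` of the `dividedDifferenceCoord`s of `P` in
`ω_{r−1}, …, ω_0`. -/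
def IsGeneralBasis.bezoutTransition (hω : IsGeneralBasis n ω) (P : K[X]) (r : ℕ) :
    Matrix (Fin r) (Fin r) K :=
  of fun i j => hω.basis.repr (hω.dividedDifferenceCoord P i) j.rev

theorem IsGeneralBasis.det_bezoutTransition (hω : IsGeneralBasis n ω) {P : K[X]}
    (hP : P.natDegree ≤ n) {r : ℕ} (hr : r ≤ n) :
    (hω.bezoutTransition P r).det = (-1) ^ (r * (r - 1) / 2) * P.coeff n ^ r := by
  have hentry {i j : Fin r} (hij : i ≤ j.rev) : hω.bezoutTransition P r i j =
      (hω.dividedDifferenceCoord P i).coeff j.rev :=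
    hω.repr_eq_coeff (by omega) ((hω.natDegree_dividedDifferenceCoord_le hP).trans hij)
  rw [det_of_antitriangular]
  · have hanti (i : Fin r) : hω.bezoutTransition P r i i.rev = P.coeff n := by
      rw [hentry (by rw [Fin.rev_rev]), Fin.rev_rev, hω.coeff_dividedDifferenceCoord hP (by omega)]
    simp [hanti]
  · intro i j hij
    have hij' : i < j.rev := Fin.lt_rev_iff.mpr hij
    rw [hentry hij'.le]
    exact coeff_eq_zero_of_natDegree_lt
      ((hω.natDegree_dividedDifferenceCoord_le hP).trans_lt hij')

/-- The first `r = n − k` rows and `n` columns of `D_ω`, with entries `ω_{r−i}(α_j) Q(α_j)` for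
1-based `i`. -/
def subresNumTop (r : ℕ) (ω : ℕ → K[X]) (α : Fin n → K) (Q : K[X]) : Matrix (Fin r) (Fin n) K :=
  of fun i j => (ω i.rev).eval (α j) * Q.eval (α j)

/-- The rows `ω_{k+1−i}(α_j) − ω_{k+1−i}(x)` (1-based `1 ≤ i ≤ k`) to which the last rows of `D_ω`
reduce once its last row `(1, …, 1)` has cleared the last column. -/
def subresNumBot (k : ℕ) (ω : ℕ → K[X]) (α : Fin n → K) : Matrix (Fin k) (Fin n) K[X] :=
  of fun i j => C ((ω (k - i)).eval (α j)) - ω (k - i)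

theorem topRows_mul_Wmat (hω : IsGeneralBasis n ω) {P Q : K[X]} (hP : P.natDegree ≤ n)
    {B : Matrix (Fin n) (Fin n) K} (hB : BezoutRelation n ω P Q B) (hα : ∀ j, P.IsRoot (α j)) :
    topRows n k B * Wmat n ω α =
      hω.bezoutTransition P (n - k) * subresNumTop (n - k) ω α Q := by
  ext i j
  have hexp := hω.sum_range_repr_smul (N := n - k) (by omega)
    (p := hω.dividedDifferenceCoord P i) ((degree_le_natDegree.trans (Nat.cast_le.mpr
      (hω.natDegree_dividedDifferenceCoord_le hP))).trans_lt (Nat.cast_lt.mpr i.isLt))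
  calc (topRows n k B * Wmat n ω α) i j
      = (B *ᵥ fun l : Fin n => (ω (n - 1 - l)).eval (α j)) ⟨i, by omega⟩ := by
        simp [topRows, Wmat, mul_apply, mulVec, dotProduct]
    _ = Q.eval (α j) * (hω.dividedDifferenceCoord P i).eval (α j) := hB.mulVec_eq hω (hα j) _
    _ = ∑ l : Fin (n - k), hω.basis.repr (hω.dividedDifferenceCoord P i) l *
          ((ω l).eval (α j) * Q.eval (α j)) := by
        conv_lhs => rw [← hexp]
        rw [eval_finsetSum, Finset.mul_sum, Finset.sum_range]
        refine Finset.sum_congr rfl fun l _ => ?_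
        rw [eval_smul, smul_eq_mul]
        ring
    _ = (hω.bezoutTransition P (n - k) * subresNumTop (n - k) ω α Q) i j :=
        (Equiv.sum_comp Fin.revPerm fun l : Fin (n - k) =>
          hω.basis.repr (hω.dividedDifferenceCoord P i) l *
            ((ω l).eval (α j) * Q.eval (α j))).symm

theorem Xmat_mul_Wmat (hω : IsGeneralBasis n ω) (hk : k < n) :
    Xmat n k ω * (Wmat n ω α).map C = -subresNumBot k ω α := by
  ext1 i j
  have hsplit (l : Fin n) : Xmat n k ω i l =
      (if l = ⟨n - k - 1 + i, by omega⟩ then -1 else 0) +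
        if l = ⟨n - 1, by omega⟩ then ω (k - i) else 0 := by
    simp only [Xmat, of_apply, Fin.ext_iff]
    split_ifs <;> first | omega | simp
  have hindex : n - 1 - (n - k - 1 + i) = k - i := by omega
  calc (Xmat n k ω * (Wmat n ω α).map C) i j
      = -C ((ω (k - i)).eval (α j)) + ω (k - i) := by
        simp [mul_apply, hsplit, add_mul, Finset.sum_add_distrib, Wmat, hindex, hω.apply_zero]
    _ = (-subresNumBot k ω α) i j := by simp [subresNumBot, sub_eq_neg_add]

/-- Splits the `n` row indices of `stackMat` into the first `n − k` and the last `k`. -/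
def stackEquiv (hk : k ≤ n) : Fin n ≃ Fin (n - k) ⊕ Fin k :=
  (finSumFinEquiv.trans (finCongr (Nat.sub_add_cancel hk))).symm

theorem stackMat_eq_submatrix_fromRows (hk : k ≤ n) (M : Matrix (Fin (n - k)) (Fin n) K)
    (Y : Matrix (Fin k) (Fin n) K[X]) :
    stackMat M Y = (fromRows (M.map C) Y).submatrix (stackEquiv hk) id := by
  ext1 i j
  obtain ⟨i, rfl⟩ := (stackEquiv hk).symm.surjective i
  rcases i with i | i <;> simp [stackMat, stackEquiv]

theorem det_subresNumW (hω : IsGeneralBasis n ω) (hk : k ≤ n) (Q : K[X]) :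
    (subresNumW n k ω α Q).det = ((fromRows ((subresNumTop (n - k) ω α Q).map C)
      (subresNumBot k ω α)).submatrix (stackEquiv hk) id).det := by
  let v : Matrix (Fin n) (Fin 1) K[X] := of fun i _ => if (i : ℕ) < n - k then 0 else ω (n - i)
  let u : Matrix (Fin 1) (Fin n) K[X] := of fun _ _ => 1
  let A : Matrix (Fin n) (Fin n) K[X] := of fun i j => subresNumW n k ω α Q i.castSucc j.castSucc
  have hblocks : (subresNumW n k ω α Q).submatrix finSumFinEquiv finSumFinEquiv =
      fromBlocks A v u 1 := by
    ext1 i j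
    have hlast : ¬ n < n - k := by omega
    rcases i with i | i <;> rcases j with j | j <;>
      simp [A, v, u, subresNumW, hω.apply_zero, hlast, one_apply, eq_iff_true_of_subsingleton]
  have hschur : A - v * u = (fromRows ((subresNumTop (n - k) ω α Q).map C)
      (subresNumBot k ω α)).submatrix (stackEquiv hk) id := by
    ext1 i j
    obtain ⟨i, rfl⟩ := (stackEquiv hk).symm.surjective i
    rcases i with i | i
    · have hindex : n - k - 1 - (i : ℕ) = n - k - (i + 1) := by omega
      simp [A, v, u, subresNumW, mul_apply, stackEquiv, subresNumTop, hindex]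
    · have hindex : n - (n - k + (i : ℕ)) = k - i := by omega
      simp [A, v, u, subresNumW, mul_apply, stackEquiv, subresNumBot, hindex]
  rw [← hschur, ← det_fromBlocks_one₂₂, ← hblocks, det_submatrix_equiv_self]

theorem subresultant_identity_of_isRoot (hω : IsGeneralBasis n ω) (hk : k < n) {P Q : K[X]}
    (hP : P.natDegree ≤ n) (hα : ∀ j, P.IsRoot (α j)) {B : Matrix (Fin n) (Fin n) K}
    (hB : BezoutRelation n ω P Q B) :
    (-1) ^ ((n - k) * (n - k - 1) / 2) * C (P.coeff n ^ (n - k)) * (subresNumW n k ω α Q).det =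
      (-1) ^ k * (stackMat (topRows n k B) (Xmat n k ω)).det * C (Wmat n ω α).det := by
  let T := hω.bezoutTransition P (n - k)
  have hT : (T.map C).det = (-1) ^ ((n - k) * (n - k - 1) / 2) * C (P.coeff n ^ (n - k)) := by
    rw [← RingHom.mapMatrix_apply, ← RingHom.map_det, hω.det_bezoutTransition hP (n.sub_le k)]
    simp
  have hprod : stackMat (topRows n k B) (Xmat n k ω) * (Wmat n ω α).map C =
      (fromRows (T.map C * (subresNumTop (n - k) ω α Q).map C)
        ((-1 : Matrix (Fin k) (Fin k) K[X]) * subresNumBot k ω α)).submatrix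
          (stackEquiv hk.le) id := by
    rw [stackMat_eq_submatrix_fromRows hk.le, ← submatrix_id_id ((Wmat n ω α).map C),
      ← submatrix_mul _ _ _ _ _ Function.bijective_id, fromRows_mul, ← Matrix.map_mul,
      topRows_mul_Wmat hω hP hB hα, Xmat_mul_Wmat hω hk, Matrix.map_mul,
      Matrix.neg_mul, Matrix.one_mul]
  have hdet := congrArg det hprod
  rw [det_fromRows_mul_mul, ← det_subresNumW hω hk.le, hT, det_neg, det_one, Fintype.card_fin,
    mul_one, det_mul, ← RingHom.mapMatrix_apply, ← RingHom.map_det] at hdet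
  have hsign : ((-1) ^ k * (-1) ^ k : K[X]) = 1 := by rw [← mul_pow, neg_one_mul, neg_neg, one_pow]
  rw [mul_assoc ((-1) ^ k), hdet]
  linear_combination (-(-1) ^ ((n - k) * (n - k - 1) / 2) * C (P.coeff n ^ (n - k)) *
    (subresNumW n k ω α Q).det) * hsign

end Block

section BaseChange

variable {K L : Type*} [Field K] [Field L] {n k : ℕ} {ω : ℕ → K[X]} {α : Fin n → L}

theorem det_stackMat_map (f : K →+* L) (B : Matrix (Fin n) (Fin n) K) :
    (stackMat (topRows n k (B.map f)) (Xmat n k fun i => (ω i).map f)).det =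
      (stackMat (topRows n k B) (Xmat n k ω)).det.map f := by
  rw [← coe_mapRingHom, RingHom.map_det]
  congr 1
  ext1 i j
  simp only [stackMat, topRows, Xmat, of_apply, map_apply, RingHom.mapMatrix_apply, coe_mapRingHom]
  split_ifs <;> simp

variable [Algebra K L]

theorem subresNumW_map (Q : K[X]) :
    subresNumW n k (fun i => (ω i).map (algebraMap K L)) α (Q.map (algebraMap K L)) =
      subresNumW n k ω α Q := by
  ext1 i j
  simp [subresNumW]

theorem Wmat_map : Wmat n (fun i => (ω i).map (algebraMap K L)) α = Wmat n ω α := by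
  ext i j
  simp [Wmat]

end BaseChange

section Roots

variable {K L ι : Type*} [Field K] [CommRing L] [Algebra K L] [Fintype ι] {α : ι → L}
  {P : K[X]} {a : K}

theorem aeval_eq_zero_of_map_eq_C_mul_prod
    (hfact : P.map (algebraMap K L) = C (algebraMap K L a) * ∏ j, (X - C (α j))) (j : ι) :
    aeval (α j) P = 0 := by
  rw [← eval_map_algebraMap, hfact, eval_mul, eval_prod,
    Finset.prod_eq_zero (Finset.mem_univ j) (by simp), mul_zero]

variable [Nontrivial L]

theorem natDegree_le_of_map_eq_C_mul_prod
    (hfact : P.map (algebraMap K L) = C (algebraMap K L a) * ∏ j, (X - C (α j))) :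
    P.natDegree ≤ Fintype.card ι := by
  rw [← natDegree_map (algebraMap K L), hfact]
  exact (natDegree_C_mul_le _ _).trans (natDegree_finsetProd_X_sub_C_eq_card Finset.univ α).le

theorem coeff_card_of_map_eq_C_mul_prod
    (hfact : P.map (algebraMap K L) = C (algebraMap K L a) * ∏ j, (X - C (α j))) :
    P.coeff (Fintype.card ι) = a := by
  have hmonic := (monic_prod_X_sub_C α Finset.univ).coeff_natDegree
  rw [natDegree_finsetProd_X_sub_C_eq_card, Finset.card_univ] at hmonic
  apply (algebraMap K L).injective
  rw [← coeff_map, hfact, coeff_C_mul, hmonic, mul_one]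

end Roots

theorem denominator_free_subresultant_identity_general
    {K L : Type*} [Field K] [Field L] [Algebra K L] {n k : ℕ} (hk : k < n)
    {ω : ℕ → K[X]} (hω : IsGeneralBasis n ω) {P Q : K[X]} (hP : P.natDegree ≤ n)
    {α : Fin n → L} (hα : ∀ j, aeval (α j) P = 0)
    {B : Matrix (Fin n) (Fin n) K} (hB : BezoutRelation n ω P Q B) :
    (-1 : L[X]) ^ ((n - k) * (n - k - 1) / 2) * C (algebraMap K L (P.coeff n) ^ (n - k)) *
        (subresNumW n k ω α Q).det =
      (-1 : L[X]) ^ k * ((stackMat (topRows n k B) (Xmat n k ω)).det).map (algebraMap K L) *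
        C (Wmat n ω α).det := by
  have hroot (j : Fin n) : (P.map (algebraMap K L)).IsRoot (α j) := by
    rw [IsRoot, eval_map_algebraMap, hα j]
  rw [← subresNumW_map, ← Wmat_map, ← det_stackMat_map, ← coeff_map]
  exact subresultant_identity_of_isRoot (hω.map _) hk (natDegree_map_le.trans hP) hroot (hB.map _)

/-- denominator-free identity
`(−1)^{(n−k)(n−k−1)/2} aₙ^{n−k} D_ω = (−1)^k det [B_{ω,k}; X_{ω,k}] · det W(α)`
in `F̄[x]`, for arbitrary (not necessarily distinct) roots `α` of `F`. -/
theorem denominator_free_subresultant_identity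
    {K : Type*} [Field K] (n m k : ℕ) (hmn : m < n) (hkm : k ≤ m)
    (ω : ℕ → Polynomial K) (hω : IsGeneralBasis n ω)
    (P Q : Polynomial K) (a : K) (ha : a ≠ 0)
    (hdegQ : Q.natDegree = m)
    (α : Fin n → AlgebraicClosure K)
    (hfact : P.map (algebraMap K (AlgebraicClosure K)) =
      Polynomial.C (algebraMap K (AlgebraicClosure K) a) *
        ∏ j : Fin n, (Polynomial.X - Polynomial.C (α j)))
    (B : Matrix (Fin n) (Fin n) K) (hB : BezoutRelation n ω P Q B) :
    (-1 : Polynomial (AlgebraicClosure K)) ^ ((n - k) * (n - k - 1) / 2) *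
        Polynomial.C (algebraMap K (AlgebraicClosure K) a ^ (n - k)) *
        (subresNumW n k ω α Q).det =
      (-1 : Polynomial (AlgebraicClosure K)) ^ k *
        ((stackMat (topRows n k B) (Xmat n k ω)).det).map
          (algebraMap K (AlgebraicClosure K)) *
        Polynomial.C (Wmat n ω α).det := by
  have hP : P.natDegree ≤ n := by simpa using natDegree_le_of_map_eq_C_mul_prod hfact
  have hcoeff : P.coeff n = a := by simpa using coeff_card_of_map_eq_C_mul_prod hfact
  rw [← hcoeff]
  exact denominator_free_subresultant_identity_general (hkm.trans_lt hmn) hω hP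
    (aeval_eq_zero_of_map_eq_C_mul_prod hfact) hB
end
end
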